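/- Let ξ and π be pdfs on ℝ with ξ ASU(0) and ξ ⪰_m π, let μ be a pdf on ℝ that is ASU(0), and let a ∈ ℝ with a ≠ 0. Define ξ̃(x) := (1/|a|) ξ(x/a) and π̃(x) := (1/|a|) π(x/a). Then ξ̃ ⋆ μ is ASU(0) and (ξ̃ ⋆ μ) ⪰_m (π̃ ⋆ μ), where (f ⋆ μ)(x) = ∫_ℝ f(x − w) μ(w) dw. -/

import Mathlib

open MeasureTheory Set
open scoped ENNReal NNReal

noncomputable section

/-- A probability density function on ℝ: measurable, nonnegative (via `ℝ≥0`),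
integrating to one against Lebesgue measure. -/
def IsPdf (f : ℝ → ℝ≥0) : Prop :=
  Measurable f ∧ ∫⁻ x, (f x : ℝ≥0∞) = 1

/-- `f` is symmetric and unimodal about `c`. -/
def ASU (c : ℝ) (f : ℝ → ℝ≥0) : Prop :=
  (∀ x, f (c - x) = f (c + x)) ∧ MonotoneOn f (Iic c) ∧ AntitoneOn f (Ici c)

/-- A distortion function: measurable, even, nondecreasing on `[0, ∞)`. -/
def IsDistortion (d : ℝ → ℝ≥0∞) : Prop :=
  Measurable d ∧ (∀ x, d (-x) = d x) ∧ MonotoneOn d (Ici (0 : ℝ))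

/-- Symmetric decreasing rearrangement of an `ℝ≥0∞`-valued function:
`f^σ(x) = ∫_0^∞ 1[2|x| < vol{z : f z > ρ}] dρ`. -/
def sdr (f : ℝ → ℝ≥0∞) (x : ℝ) : ℝ≥0∞ :=
  ∫⁻ ρ in Ioi (0 : ℝ),
    if ENNReal.ofReal (2 * |x|) < volume {z : ℝ | ENNReal.ofReal ρ < f z} then 1 else 0

/-- Symmetric decreasing rearrangement of an `ℝ≥0`-valued function. -/
def sdr' (f : ℝ → ℝ≥0) : ℝ → ℝ≥0∞ := sdr fun x => (f x : ℝ≥0∞)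

/-- `ξ` majorizes `π`: `∫_{-ρ}^{ρ} ξ^σ ≥ ∫_{-ρ}^{ρ} π^σ` for all `ρ ≥ 0`. -/
def Majorizes (ξ π : ℝ → ℝ≥0) : Prop :=
  ∀ ρ : ℝ, 0 ≤ ρ → ∫⁻ x in Ioo (-ρ) ρ, sdr' π x ≤ ∫⁻ x in Ioo (-ρ) ρ, sdr' ξ x

/-- Symmetric and unimodal about `c`, for `[0,∞]`-valued functions. -/
def ASUE (c : ℝ) (f : ℝ → ℝ≥0∞) : Prop :=
  (∀ x, f (c - x) = f (c + x)) ∧ MonotoneOn f (Iic c) ∧ AntitoneOn f (Ici c)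

/-- Majorization for `[0,∞]`-valued densities. -/
def MajorizesE (ξ π : ℝ → ℝ≥0∞) : Prop :=
  ∀ ρ : ℝ, 0 ≤ ρ → ∫⁻ x in Ioo (-ρ) ρ, sdr π x ≤ ∫⁻ x in Ioo (-ρ) ρ, sdr ξ x

/-- A set that with each point contains all points of no larger absolute value. -/
def RadiallyClosed (A : Set ℝ) : Prop := ∀ x ∈ A, ∀ y, |y| ≤ |x| → y ∈ A

/-- A function that is nonincreasing in the absolute value of its argument. -/
def RadiallyDecreasing (f : ℝ → ℝ≥0∞) : Prop := ∀ x y, |x| ≤ |y| → f y ≤ f x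

/-- The distribution function of `f`. -/
def distr (f : ℝ → ℝ≥0∞) (u : ℝ) : ℝ≥0∞ := volume {z : ℝ | ENNReal.ofReal u < f z}

/-- The largest mass that `f` puts on a set of measure `s`, through the layer-cake formula. -/
def topMass (f : ℝ → ℝ≥0∞) (s : ℝ≥0∞) : ℝ≥0∞ := ∫⁻ u in Ioi (0 : ℝ), min s (distr f u)

/-- The measure of the part of `E` within distance `r` of `y`. -/
def overlap (E : Set ℝ) (r y : ℝ) : ℝ≥0∞ := volume (E ∩ Ioo (y - r) (y + r))

lemma distr_antitone (f : ℝ → ℝ≥0∞) : Antitone (distr f) := fun _ _ h =>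
  measure_mono fun _ hz => lt_of_le_of_lt (ENNReal.ofReal_le_ofReal h) hz

lemma measurable_distr (f : ℝ → ℝ≥0∞) : Measurable (distr f) := (distr_antitone f).measurable

lemma RadiallyDecreasing.radiallyClosed {f : ℝ → ℝ≥0∞} (hf : RadiallyDecreasing f) (c : ℝ≥0∞) :
    RadiallyClosed {z | c < f z} := fun x hx y hy => lt_of_lt_of_le hx (hf y x hy)

lemma radiallyClosed_Ioo (r : ℝ) : RadiallyClosed (Ioo (-r) r) := fun x hx y hy => by
  rw [mem_Ioo, ← abs_lt] at *
  exact hy.trans_lt hx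

lemma RadiallyClosed.measure_inter {A B : Set ℝ} (hA : RadiallyClosed A) (hB : RadiallyClosed B) :
    volume (A ∩ B) = min (volume A) (volume B) := by
  have h : A ⊆ B ∨ B ⊆ A := by
    by_contra! h
    obtain ⟨⟨x, hxA, hxB⟩, ⟨y, hyB, hyA⟩⟩ := And.imp not_subset.1 not_subset.1 h
    rcases le_total |x| |y| with hxy | hxy
    · exact hxB (hB y hyB x hxy)
    · exact hyA (hA x hxA y hxy)
  rcases h with h | h
  · rw [inter_eq_left.2 h, min_eq_left (measure_mono h)]
  · rw [inter_eq_right.2 h, min_eq_right (measure_mono h)]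

/-- A radially closed set of finite measure is almost a symmetric interval. -/
lemma RadiallyClosed.ae_eq_Ioo {A : Set ℝ} (hA : RadiallyClosed A) (hfin : volume A ≠ ∞) :
    A =ᵐ[volume] Ioo (-((volume A).toReal / 2)) ((volume A).toReal / 2) := by
  set r := (volume A).toReal / 2 with hr
  have hr0 : 0 ≤ r := by positivity
  have hv : volume A = ENNReal.ofReal (r - -r) := by
    rw [hr, sub_neg_eq_add, add_halves, ENNReal.ofReal_toReal hfin]
  have h1 : Ioo (-r) r ⊆ A := by
    intro x hx
    by_contra hxA
    have hsub : A ⊆ Icc (-|x|) |x| := by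
      intro y hy
      rw [mem_Icc, ← abs_le]
      by_contra! hlt
      exact hxA (hA y hy x hlt.le)
    have := measure_mono (μ := volume) hsub
    rw [hv, Real.volume_Icc] at this
    rw [mem_Ioo, ← abs_lt] at hx
    have := (ENNReal.ofReal_le_ofReal_iff (by linarith [abs_nonneg x])).1 this
    linarith
  have h2 : A ⊆ Icc (-r) r := by
    intro x hx
    have hsub : Icc (-|x|) |x| ⊆ A := fun y hy => hA x hx y (abs_le.2 hy)
    have := measure_mono (μ := volume) hsub
    rw [hv, Real.volume_Icc] at this
    have := (ENNReal.ofReal_le_ofReal_iff (by linarith)).1 this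
    rw [mem_Icc, ← abs_le]
    linarith
  exact (h2.eventuallyLE.trans Ioo_ae_eq_Icc.symm.le).antisymm h1.eventuallyLE

lemma volume_Ioi_inter_ofReal_lt {t : ℝ} (ht : 0 ≤ t) (c : ℝ≥0∞) :
    volume ({u : ℝ | ENNReal.ofReal u < c} ∩ Ioi t) = c - ENNReal.ofReal t := by
  induction c with
  | top => simp
  | coe c =>
    have : {u : ℝ | ENNReal.ofReal u < (c : ℝ≥0∞)} ∩ Ioi t = Ioo t c := by
      ext u
      simp only [mem_inter_iff, mem_ofPred_eq, mem_Ioi, mem_Ioo]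
      constructor
      · rintro ⟨h1, h2⟩
        refine ⟨h2, ?_⟩
        rw [← ENNReal.ofReal_coe_nnreal] at h1
        exact (ENNReal.ofReal_lt_ofReal_iff_of_nonneg (ht.trans h2.le)).1 h1
      · rintro ⟨h1, h2⟩
        refine ⟨?_, h1⟩
        rw [← ENNReal.ofReal_coe_nnreal]
        exact (ENNReal.ofReal_lt_ofReal_iff_of_nonneg (ht.trans h1.le)).2 h2
    rw [this, Real.volume_Ioo, ENNReal.ofReal_sub _ ht, ENNReal.ofReal_coe_nnreal]

/-- Layer-cake formula for the part of a function above a level. -/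
lemma lintegral_Ioi_measure_lt {f : ℝ → ℝ≥0∞} (hf : Measurable f) (ν : Measure ℝ) [SFinite ν]
    {t : ℝ} (ht : 0 ≤ t) :
    ∫⁻ u in Ioi t, ν {z | ENNReal.ofReal u < f z} = ∫⁻ z, (f z - ENNReal.ofReal t) ∂ν := by
  have hS : MeasurableSet {p : ℝ × ℝ | ENNReal.ofReal p.1 < f p.2} :=
    measurableSet_lt (ENNReal.measurable_ofReal.comp measurable_fst) (hf.comp measurable_snd)
  have h1 : ∀ u, ν {z | ENNReal.ofReal u < f z} =
      ∫⁻ z, {p : ℝ × ℝ | ENNReal.ofReal p.1 < f p.2}.indicator 1 (u, z) ∂ν := fun u => by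
    rw [← lintegral_indicator_one (measurableSet_lt measurable_const hf)]
    rfl
  simp_rw [h1]
  rw [lintegral_lintegral_swap (by exact (measurable_one.indicator hS).aemeasurable)]
  refine lintegral_congr fun z => ?_
  rw [← volume_Ioi_inter_ofReal_lt ht,
    ← Measure.restrict_apply (measurableSet_lt ENNReal.measurable_ofReal measurable_const),
    ← lintegral_indicator_one (measurableSet_lt ENNReal.measurable_ofReal measurable_const)]
  rfl

lemma lintegral_eq_lintegral_Ioi_measure_lt {f : ℝ → ℝ≥0∞} (hf : Measurable f) (ν : Measure ℝ)
    [SFinite ν] : ∫⁻ z, f z ∂ν = ∫⁻ u in Ioi (0 : ℝ), ν {z | ENNReal.ofReal u < f z} := by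
  simp [lintegral_Ioi_measure_lt hf ν le_rfl]

lemma volume_ofReal_two_mul_abs_lt (c : ℝ≥0∞) :
    volume {x : ℝ | ENNReal.ofReal (2 * |x|) < c} = c := by
  induction c with
  | top => simp only [ENNReal.ofReal_lt_top, ofPred_true, Real.volume_univ]
  | coe c =>
    have : {x : ℝ | ENNReal.ofReal (2 * |x|) < (c : ℝ≥0∞)} = Ioo (-(c / 2 : ℝ)) (c / 2) := by
      ext x
      rw [mem_ofPred_eq, mem_Ioo, ← abs_lt, ← ENNReal.ofReal_coe_nnreal,
        ENNReal.ofReal_lt_ofReal_iff_of_nonneg (by positivity), lt_div_iff₀' two_pos]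
    rw [this, Real.volume_Ioo, sub_neg_eq_add, add_halves, ENNReal.ofReal_coe_nnreal]

lemma lintegral_Ioo_sdr (f : ℝ → ℝ≥0∞) (ρ : ℝ) :
    ∫⁻ x in Ioo (-ρ) ρ, sdr f x = topMass f (ENNReal.ofReal (2 * ρ)) := by
  have hS : MeasurableSet {p : ℝ × ℝ | ENNReal.ofReal (2 * |p.1|) < distr f p.2} :=
    measurableSet_lt (by fun_prop) ((measurable_distr f).comp measurable_snd)
  have h1 : ∀ x, sdr f x = ∫⁻ u in Ioi (0 : ℝ),
      {p : ℝ × ℝ | ENNReal.ofReal (2 * |p.1|) < distr f p.2}.indicator 1 (x, u) := fun x =>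
    lintegral_congr fun u => by simp [indicator_apply, distr]
  simp_rw [h1]
  rw [lintegral_lintegral_swap (by exact (measurable_one.indicator hS).aemeasurable)]
  refine lintegral_congr fun u => ?_
  have hm : MeasurableSet {x : ℝ | ENNReal.ofReal (2 * |x|) < distr f u} :=
    measurableSet_lt (by fun_prop) measurable_const
  have hc : RadiallyClosed {x : ℝ | ENNReal.ofReal (2 * |x|) < distr f u} := fun x hx y hy =>
    lt_of_le_of_lt (ENNReal.ofReal_le_ofReal (by linarith)) hx
  calc _ = volume ({x : ℝ | ENNReal.ofReal (2 * |x|) < distr f u} ∩ Ioo (-ρ) ρ) := by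
        rw [← Measure.restrict_apply hm, ← lintegral_indicator_one hm]
        rfl
    _ = _ := by
        rw [hc.measure_inter (radiallyClosed_Ioo ρ), volume_ofReal_two_mul_abs_lt, min_comm,
          Real.volume_Ioo, sub_neg_eq_add, two_mul]

lemma setLIntegral_le_topMass {f : ℝ → ℝ≥0∞} (hf : Measurable f) (A : Set ℝ) :
    ∫⁻ x in A, f x ≤ topMass f (volume A) := by
  rw [lintegral_eq_lintegral_Ioi_measure_lt hf]
  refine lintegral_mono fun u => ?_
  rw [Measure.restrict_apply (measurableSet_lt measurable_const hf)]
  exact le_min (measure_mono inter_subset_right) (measure_mono inter_subset_left)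

lemma setLIntegral_eq_topMass {f : ℝ → ℝ≥0∞} (hf : Measurable f) (hd : RadiallyDecreasing f)
    {A : Set ℝ} (hA : RadiallyClosed A) : ∫⁻ x in A, f x = topMass f (volume A) := by
  rw [lintegral_eq_lintegral_Ioi_measure_lt hf]
  refine lintegral_congr fun u => ?_
  rw [Measure.restrict_apply (measurableSet_lt measurable_const hf),
    (hd.radiallyClosed _).measure_inter hA, min_comm]
  rfl

lemma lintegral_mul_eq_lintegral_Ioi {f g : ℝ → ℝ≥0∞} (hf : Measurable f) (hg : Measurable g) :
    ∫⁻ x, f x * g x = ∫⁻ w in Ioi (0 : ℝ), ∫⁻ x in {z | ENNReal.ofReal w < g z}, f x := by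
  have h := lintegral_eq_lintegral_Ioi_measure_lt hg (volume.withDensity f)
  rw [lintegral_withDensity_eq_lintegral_mul _ hf hg] at h
  refine h.trans (lintegral_congr fun w => ?_)
  exact withDensity_apply _ (measurableSet_lt measurable_const hg)

lemma lintegral_mul_le {f g : ℝ → ℝ≥0∞} (hf : Measurable f) (hg : Measurable g) :
    ∫⁻ x, f x * g x ≤ ∫⁻ w in Ioi (0 : ℝ), topMass f (distr g w) := by
  rw [lintegral_mul_eq_lintegral_Ioi hf hg]
  exact lintegral_mono fun w => setLIntegral_le_topMass hf _

lemma lintegral_mul_eq {f g : ℝ → ℝ≥0∞} (hf : Measurable f) (hg : Measurable g)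
    (hfd : RadiallyDecreasing f) (hgd : RadiallyDecreasing g) :
    ∫⁻ x, f x * g x = ∫⁻ w in Ioi (0 : ℝ), topMass f (distr g w) := by
  rw [lintegral_mul_eq_lintegral_Ioi hf hg]
  exact lintegral_congr fun w => setLIntegral_eq_topMass hf hfd (hgd.radiallyClosed _)

lemma lintegral_topMass_distr_comm (f g : ℝ → ℝ≥0∞) :
    ∫⁻ w in Ioi (0 : ℝ), topMass f (distr g w) = ∫⁻ u in Ioi (0 : ℝ), topMass g (distr f u) := by
  unfold topMass
  rw [lintegral_lintegral_swap]
  · simp_rw [min_comm]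
  · exact (((measurable_distr g).comp measurable_fst).min
      ((measurable_distr f).comp measurable_snd)).aemeasurable

lemma distr_ne_top {f : ℝ → ℝ≥0∞} (hf : Measurable f) (hfin : ∫⁻ x, f x ≠ ∞) {u : ℝ}
    (hu : 0 < u) : distr f u ≠ ∞ := by
  have h := mul_meas_ge_le_lintegral (μ := volume) hf (ENNReal.ofReal u)
  have h1 : volume {x | ENNReal.ofReal u ≤ f x} ≠ ∞ := by
    intro htop
    rw [htop, ENNReal.mul_top (by simpa using hu)] at h
    exact hfin (top_le_iff.1 h)
  exact ne_top_of_le_ne_top h1 (measure_mono fun x (hx : _ < f x) => le_of_lt hx)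

lemma topMass_le {f : ℝ → ℝ≥0∞} (hf : Measurable f) (s : ℝ≥0∞) {t : ℝ} (ht : 0 ≤ t) :
    topMass f s ≤ ENNReal.ofReal t * s + ∫⁻ x, (f x - ENNReal.ofReal t) := by
  rw [topMass, ← Ioc_union_Ioi_eq_Ioi ht,
    lintegral_union measurableSet_Ioi (Ioc_disjoint_Ioi le_rfl), ← lintegral_Ioi_measure_lt hf _ ht]
  refine add_le_add ?_ (lintegral_mono fun u => min_le_right _ _)
  calc _ ≤ ∫⁻ _ in Ioc 0 t, s := lintegral_mono fun u => min_le_left _ _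
    _ = _ := by simp [mul_comm]

lemma le_topMass {F : ℝ → ℝ≥0∞} (hF : Measurable F) (hd : RadiallyDecreasing F) {r t : ℝ}
    (hr : 0 ≤ r) (ht : 0 ≤ t) (h : F r = ENNReal.ofReal t) :
    ENNReal.ofReal t * ENNReal.ofReal (2 * r) + ∫⁻ x, (F x - ENNReal.ofReal t) ≤
      topMass F (ENNReal.ofReal (2 * r)) := by
  have hvol : volume (Icc (-r) r) = ENNReal.ofReal (2 * r) := by
    rw [Real.volume_Icc, sub_neg_eq_add, two_mul]
  rw [topMass, ← Ioc_union_Ioi_eq_Ioi ht,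
    lintegral_union measurableSet_Ioi (Ioc_disjoint_Ioi le_rfl), ← lintegral_Ioi_measure_lt hF _ ht,
    setLIntegral_congr Ioo_ae_eq_Ioc.symm]
  refine add_le_add ?_ (setLIntegral_mono' measurableSet_Ioi fun u hu => le_min ?_ le_rfl)
  · calc _ = ∫⁻ _ in Ioo 0 t, ENNReal.ofReal (2 * r) := by simp [mul_comm]
      _ ≤ _ := setLIntegral_mono' measurableSet_Ioo fun u hu => le_min le_rfl ?_
    rw [← hvol]
    refine measure_mono fun x hx => lt_of_lt_of_le ?_ (hd x r ?_)
    · rw [h]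
      exact (ENNReal.ofReal_lt_ofReal_iff (hu.1.trans hu.2)).2 hu.2
    · rw [abs_of_nonneg hr]
      exact abs_le.2 hx
  · rw [← hvol]
    refine measure_mono fun x (hx : _ < F x) => abs_le.1 ?_
    by_contra! hlt
    have : F x ≤ ENNReal.ofReal t := h ▸ hd r x (by rw [abs_of_nonneg hr]; exact hlt.le)
    exact absurd (hx.trans_le this) (not_lt.2 (ENNReal.ofReal_le_ofReal (le_of_lt hu)))

/-- Comparison of the masses above each level implies comparison of top masses. -/
lemma topMass_le_topMass {f F : ℝ → ℝ≥0∞} (hf : Measurable f) (hF : Measurable F)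
    (hd : RadiallyDecreasing F) (hfin : ∫⁻ x, F x ≠ ∞)
    (h : ∀ t : ℝ, 0 ≤ t →
      ∫⁻ x, (f x - ENNReal.ofReal t) ≤ ∫⁻ x, (F x - ENNReal.ofReal t))
    {s : ℝ≥0∞} (hs : s ≠ ∞) : topMass f s ≤ topMass F s := by
  rcases eq_or_ne s 0 with rfl | hs0
  · simp [topMass]
  set r := s.toReal / 2 with hr
  have hr0 : 0 < r := half_pos (ENNReal.toReal_pos hs0 hs)
  have hsr : s = ENNReal.ofReal (2 * r) := by
    rw [hr, mul_div_cancel₀ _ two_ne_zero, ENNReal.ofReal_toReal hs]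
  have hFr : F r ≠ ∞ := by
    intro htop
    apply hfin
    rw [← top_le_iff]
    calc ∞ = ∫⁻ _ in Ioo (-r) r, ∞ := by
          rw [setLIntegral_const, ENNReal.top_mul]
          simpa [Real.volume_Ioo] using hr0
      _ ≤ ∫⁻ x in Ioo (-r) r, F x := setLIntegral_mono' measurableSet_Ioo fun x hx =>
          htop ▸ hd x r (by rw [abs_of_pos hr0]; exact (abs_lt.2 hx).le)
      _ ≤ _ := setLIntegral_le_lintegral _ _
  have ht : 0 ≤ (F r).toReal := ENNReal.toReal_nonneg
  refine (topMass_le hf s ht).trans ?_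
  rw [hsr]
  refine le_trans ?_ (le_topMass hF hd hr0.le ht (ENNReal.ofReal_toReal hFr).symm)
  exact add_le_add le_rfl (h _ ht)

/-- Comparison of integrals over sets implies comparison of the masses above each level. -/
lemma lintegral_sub_le_lintegral_sub {f F : ℝ → ℝ≥0∞} (hf : Measurable f) (hF : Measurable F)
    (hfin : ∫⁻ x, f x ≠ ∞) (hle : ∫⁻ x, f x ≤ ∫⁻ x, F x)
    (h : ∀ E, MeasurableSet E → volume E ≠ ∞ → ∫⁻ x in E, f x ≤ topMass F (volume E))
    {t : ℝ} (ht : 0 ≤ t) :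
    ∫⁻ x, (f x - ENNReal.ofReal t) ≤ ∫⁻ x, (F x - ENNReal.ofReal t) := by
  rcases ht.eq_or_lt with rfl | ht0
  · simpa using hle
  set E := {x | ENNReal.ofReal t < f x}
  have hEm : MeasurableSet E := measurableSet_lt measurable_const hf
  have hEfin : volume E ≠ ∞ := distr_ne_top hf hfin ht0
  have h1 : ENNReal.ofReal t * volume E + ∫⁻ x, (f x - ENNReal.ofReal t) = ∫⁻ x in E, f x := by
    have h2 : ∫⁻ x, (f x - ENNReal.ofReal t) = ∫⁻ x in E, (f x - ENNReal.ofReal t) := by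
      rw [← lintegral_indicator hEm]
      refine lintegral_congr fun x => ?_
      by_cases hx : x ∈ E
      · simp [hx]
      · rw [indicator_of_notMem hx, tsub_eq_zero_of_le (not_lt.1 hx)]
    rw [h2, ← setLIntegral_const, ← lintegral_add_left measurable_const]
    exact setLIntegral_congr_fun hEm fun x hx => add_tsub_cancel_of_le (le_of_lt hx)
  have h3 := (h1.le.trans (h E hEm hEfin)).trans (topMass_le hF _ ht)
  exact (ENNReal.add_le_add_iff_left (ENNReal.mul_ne_top ENNReal.ofReal_ne_top hEfin)).1 h3

lemma measurable_overlap {E : Set ℝ} (hE : MeasurableSet E) (r : ℝ) : Measurable (overlap E r) := by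
  have hS : MeasurableSet {p : ℝ × ℝ | p.2 ∈ E ∧ p.1 - r < p.2 ∧ p.2 < p.1 + r} :=
    (measurable_snd hE).inter
      ((measurableSet_lt (measurable_fst.sub_const r) measurable_snd).inter
        (measurableSet_lt measurable_snd (measurable_fst.add_const r)))
  exact measurable_measure_prodMk_left hS

lemma lintegral_volume_Ioo {α β : ℝ → ℝ} (hα : Measurable α) (hβ : Measurable β) :
    ∫⁻ y, volume (Ioo (α y) (β y)) = ∫⁻ s, volume {y | α y < s ∧ s < β y} := by
  have hS : MeasurableSet {p : ℝ × ℝ | α p.1 < p.2 ∧ p.2 < β p.1} :=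
    (measurableSet_lt (hα.comp measurable_fst) measurable_snd).inter
      (measurableSet_lt measurable_snd (hβ.comp measurable_fst))
  exact (Measure.prod_apply (μ := volume) (ν := volume) hS).symm.trans
    (Measure.prod_apply_symm (μ := volume) (ν := volume) hS)

lemma volume_real_inter_Iic_sub {E : Set ℝ} (hfin : volume E ≠ ∞)
    {a b : ℝ} (hab : a ≤ b) :
    volume.real (E ∩ Iic b) - volume.real (E ∩ Iic a) = volume.real (E ∩ Ioc a b) := by
  rw [sub_eq_iff_eq_add', ← Iic_union_Ioc_eq_Iic hab, inter_union_distrib_left]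
  have hne : volume (E ∩ Iic a ∪ E ∩ Ioc a b) ≠ ∞ :=
    measure_ne_top_of_subset (union_subset inter_subset_left inter_subset_left) hfin
  rw [← measureReal_inter_add_sdiff (measurableSet_Iic (a := a)) hne]
  congr 2 <;> ext x <;> simp <;> grind

lemma overlap_eq_ofReal {E : Set ℝ} (hfin : volume E ≠ ∞) {r : ℝ} (hr : 0 ≤ r) (y : ℝ) :
    overlap E r y =
      ENNReal.ofReal (volume.real (E ∩ Iic (y + r)) - volume.real (E ∩ Iic (y - r))) := by
  rw [volume_real_inter_Iic_sub hfin (by linarith), measureReal_def, ENNReal.ofReal_toReal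
    (measure_ne_top_of_subset inter_subset_left hfin), overlap]
  exact measure_congr ((ae_eq_refl E).inter Ioo_ae_eq_Ioc)

lemma lintegral_overlap_sub_le {E : Set ℝ} (hfin : volume E ≠ ∞) {r t : ℝ} (hr : 0 ≤ r)
    (ht : 0 ≤ t) :
    ∫⁻ y, (overlap E r y - ENNReal.ofReal t) ≤
      ENNReal.ofReal (2 * r - t) * ENNReal.ofReal ((volume E).toReal - t) := by
  set F : ℝ → ℝ := fun x => volume.real (E ∩ Iic x)
  have hFsub : ∀ {a b}, a ≤ b → F b - F a = volume.real (E ∩ Ioc a b) :=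
    fun hab => volume_real_inter_Iic_sub hfin hab
  have hFmono : Monotone F := fun a b hab => by
    rw [← sub_nonneg, hFsub hab]
    positivity
  have hFlip : ∀ {a b}, a ≤ b → F b - F a ≤ b - a := fun {a b} hab => by
    rw [hFsub hab]
    refine (measureReal_mono inter_subset_right (by simp)).trans ?_
    rw [Real.volume_real_Ioc_of_le hab]
  have hF0 : ∀ x, 0 ≤ F x := fun x => measureReal_nonneg
  have hFle : ∀ x, F x ≤ (volume E).toReal := fun x => measureReal_mono inter_subset_left hfin
  have hFm : Measurable F := hFmono.measurable
  have h1 : ∀ y, overlap E r y - ENNReal.ofReal t = volume (Ioo (F (y - r)) (F (y + r) - t)) := by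
    intro y
    rw [overlap_eq_ofReal hfin hr, ← ENNReal.ofReal_sub _ ht, Real.volume_Ioo]
    congr 1
    ring
  simp_rw [h1]
  rw [lintegral_volume_Ioo (by fun_prop) (by fun_prop)]
  calc ∫⁻ s, volume {y | F (y - r) < s ∧ s < F (y + r) - t}
      ≤ ∫⁻ s, (Ioo 0 ((volume E).toReal - t)).indicator
          (fun _ => ENNReal.ofReal (2 * r - t)) s := by
        refine lintegral_mono fun s => ?_
        by_cases hs : s ∈ Ioo 0 ((volume E).toReal - t)
        · rw [indicator_of_mem hs]
          refine (Real.volume_le_diam _).trans (Metric.ediam_le fun x hx y hy => ?_)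
          have key : ∀ x y, F (y - r) < s → s < F (x + r) - t → y - x ≤ 2 * r - t := by
            intro x y hy hx
            have hlt : y - r < x + r := hFmono.reflect_lt (by linarith)
            have := hFlip hlt.le
            linarith
          rw [edist_dist, Real.dist_eq]
          exact ENNReal.ofReal_le_ofReal
            (abs_le'.2 ⟨key y x hx.1 hy.2, by linarith [key x y hy.1 hx.2]⟩)
        · have : {y | F (y - r) < s ∧ s < F (y + r) - t} = ∅ := by
            refine eq_empty_of_forall_notMem fun y hy => hs ⟨?_, ?_⟩
            · exact (hF0 _).trans_lt hy.1
            · exact hy.2.trans_le (sub_le_sub_right (hFle _) _)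
          rw [this]
          simp
    _ = _ := by
        rw [lintegral_indicator measurableSet_Ioo, setLIntegral_const, Real.volume_Ioo, sub_zero]

lemma overlap_Ioo (q r y : ℝ) :
    overlap (Ioo (-q) q) r y = ENNReal.ofReal (min (min (2 * q) (2 * r)) (q + r - |y|)) := by
  rw [overlap, Ioo_inter_Ioo, Real.volume_Ioo]
  congr 1
  grind

lemma radiallyDecreasing_overlap_Ioo (q r : ℝ) : RadiallyDecreasing (overlap (Ioo (-q) q) r) := by
  intro x y hxy
  rw [overlap_Ioo, overlap_Ioo]
  gcongr

lemma le_lintegral_overlap_Ioo_sub (q r : ℝ) {t : ℝ} (ht : 0 ≤ t) :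
    ENNReal.ofReal (2 * r - t) * ENNReal.ofReal (2 * q - t) ≤
      ∫⁻ y, (overlap (Ioo (-q) q) r y - ENNReal.ofReal t) := by
  have h1 : ∀ y, overlap (Ioo (-q) q) r y - ENNReal.ofReal t =
      volume (Ioo (max (-q) (y - r)) (min q (y + r) - t)) := by
    intro y
    rw [overlap, Ioo_inter_Ioo, Real.volume_Ioo, ← ENNReal.ofReal_sub _ ht, Real.volume_Ioo]
    congr 1
    ring
  simp_rw [h1]
  rw [lintegral_volume_Ioo (by fun_prop) (by fun_prop)]
  calc _ = ∫⁻ _ in Ioo (-q) (q - t), ENNReal.ofReal (2 * r - t) := by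
        rw [setLIntegral_const, Real.volume_Ioo]
        congr 2
        ring
    _ ≤ ∫⁻ s in Ioo (-q) (q - t), volume {y | max (-q) (y - r) < s ∧ s < min q (y + r) - t} := by
        refine setLIntegral_mono' measurableSet_Ioo fun s hs => ?_
        calc _ = volume (Ioo (s + t - r) (s + r)) := by
              rw [Real.volume_Ioo]
              congr 1
              ring
          _ ≤ _ := measure_mono fun y hy => by
              simp only [mem_ofPred_eq, max_lt_iff, lt_sub_iff_add_lt, lt_min_iff, mem_Ioo] at *
              refine ⟨⟨?_, ?_⟩, ?_, ?_⟩ <;> linarith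
    _ ≤ _ := setLIntegral_le_lintegral _ _

lemma lintegral_overlap_ne_top {E : Set ℝ} (hfin : volume E ≠ ∞) {r : ℝ} (hr : 0 ≤ r) :
    ∫⁻ y, overlap E r y ≠ ∞ := by
  have h := lintegral_overlap_sub_le hfin hr le_rfl
  simp only [ENNReal.ofReal_zero, tsub_zero] at h
  exact ne_top_of_le_ne_top (ENNReal.mul_ne_top ENNReal.ofReal_ne_top ENNReal.ofReal_ne_top) h

/-- Replacing a set by the centred interval of the same measure increases the top masses of its
overlap function. -/
lemma topMass_overlap_le {E : Set ℝ} (hE : MeasurableSet E) (hfin : volume E ≠ ∞) {r : ℝ}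
    (hr : 0 ≤ r) {s : ℝ≥0∞} (hs : s ≠ ∞) :
    topMass (overlap E r) s ≤
      topMass (overlap (Ioo (-((volume E).toReal / 2)) ((volume E).toReal / 2)) r) s := by
  refine topMass_le_topMass (measurable_overlap hE r) (measurable_overlap measurableSet_Ioo r)
    (radiallyDecreasing_overlap_Ioo _ r) (lintegral_overlap_ne_top (by simp) hr) (fun t ht => ?_) hs
  refine (lintegral_overlap_sub_le hfin hr ht).trans ?_
  refine le_trans (le_of_eq ?_) (le_lintegral_overlap_Ioo_sub _ r ht)
  rw [mul_div_cancel₀ _ two_ne_zero]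

/-- A form of Riesz's rearrangement inequality. -/
lemma lintegral_mul_overlap_le {p q : ℝ → ℝ≥0∞} (hp : Measurable p) (hq : Measurable q)
    (hqd : RadiallyDecreasing q) (hqfin : ∫⁻ x, q x ≠ ∞)
    (hpq : ∀ s, s ≠ ∞ → topMass p s ≤ topMass q s)
    {E : Set ℝ} (hE : MeasurableSet E) (hfin : volume E ≠ ∞) {r : ℝ} (hr : 0 ≤ r) :
    ∫⁻ y, p y * overlap E r y ≤
      ∫⁻ y, q y * overlap (Ioo (-((volume E).toReal / 2)) ((volume E).toReal / 2)) r y := by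
  have hm := measurable_overlap hE r
  calc _ ≤ ∫⁻ w in Ioi (0 : ℝ), topMass p (distr (overlap E r) w) := lintegral_mul_le hp hm
    _ ≤ ∫⁻ w in Ioi (0 : ℝ), topMass q (distr (overlap E r) w) :=
        setLIntegral_mono' measurableSet_Ioi fun w hw =>
          hpq _ (distr_ne_top hm (lintegral_overlap_ne_top hfin hr) hw)
    _ = ∫⁻ u in Ioi (0 : ℝ), topMass (overlap E r) (distr q u) := lintegral_topMass_distr_comm _ _
    _ ≤ ∫⁻ u in Ioi (0 : ℝ),
          topMass (overlap (Ioo (-((volume E).toReal / 2)) ((volume E).toReal / 2)) r)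
            (distr q u) :=
        setLIntegral_mono' measurableSet_Ioi fun u hu =>
          topMass_overlap_le hE hfin hr (distr_ne_top hq hqfin hu)
    _ = _ := by
        rw [lintegral_topMass_distr_comm,
          lintegral_mul_eq hq (measurable_overlap measurableSet_Ioo r) hqd (radiallyDecreasing_overlap_Ioo _ r)]

/-- The convolution of `f` and `g`. -/
def conv (f g : ℝ → ℝ≥0∞) (x : ℝ) : ℝ≥0∞ := ∫⁻ w, f (x - w) * g w

/-- The mass of `f` within distance `r` of `x`. -/
def windowMass (f : ℝ → ℝ≥0∞) (r x : ℝ) : ℝ≥0∞ := ∫⁻ w in Ioo (-r) r, f (x - w)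

lemma measurable_conv {f g : ℝ → ℝ≥0∞} (hf : Measurable f) (hg : Measurable g) :
    Measurable (conv f g) :=
  Measurable.lintegral_prod_right' (f := fun p : ℝ × ℝ => f (p.1 - p.2) * g p.2) (by fun_prop)

lemma lintegral_conv {f g : ℝ → ℝ≥0∞} (hf : Measurable f) (hg : Measurable g) :
    ∫⁻ x, conv f g x = (∫⁻ x, f x) * ∫⁻ x, g x := by
  unfold conv
  rw [lintegral_lintegral_swap (by fun_prop), ← lintegral_const_mul _ hg]
  refine lintegral_congr fun w => ?_
  rw [lintegral_mul_const _ (by fun_prop), lintegral_sub_right_eq_self]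

lemma conv_eq_lintegral_windowMass {f g : ℝ → ℝ≥0∞} (hf : Measurable f) (hg : Measurable g)
    (hgd : RadiallyDecreasing g) (hgfin : ∫⁻ x, g x ≠ ∞) (x : ℝ) :
    conv f g x = ∫⁻ u in Ioi (0 : ℝ), windowMass f ((distr g u).toReal / 2) x := by
  rw [conv, lintegral_mul_eq_lintegral_Ioi (by fun_prop) hg]
  exact setLIntegral_congr_fun measurableSet_Ioi fun u hu =>
    setLIntegral_congr ((hgd.radiallyClosed _).ae_eq_Ioo (distr_ne_top hg hgfin hu))

lemma RadiallyDecreasing.windowMass {f : ℝ → ℝ≥0∞} (hfd : RadiallyDecreasing f) (hf : Measurable f)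
    (hfin : ∫⁻ x, f x ≠ ∞) (r : ℝ) : RadiallyDecreasing (windowMass f r) := by
  have h : ∀ x, _root_.windowMass f r x =
      ∫⁻ v in Ioi (0 : ℝ), overlap (Ioo (-r) r) ((distr f v).toReal / 2) x := fun x => by
    have hfx : Measurable fun w => f (x - w) := by fun_prop
    rw [_root_.windowMass, lintegral_eq_lintegral_Ioi_measure_lt hfx]
    refine setLIntegral_congr_fun measurableSet_Ioi fun v hv => ?_
    rw [Measure.restrict_apply (measurableSet_lt measurable_const hfx), inter_comm, overlap]
    refine measure_congr ((ae_eq_refl _).inter ?_)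
    have := (quasiMeasurePreserving_sub_left volume x).preimage_ae_eq
      ((hfd.radiallyClosed _).ae_eq_Ioo (distr_ne_top hf hfin hv))
    refine this.trans (Filter.EventuallyEq.of_eq ?_)
    rw [preimage_const_sub_Ioo, sub_neg_eq_add]
    rfl
  intro x y hxy
  rw [h, h]
  exact lintegral_mono fun v => radiallyDecreasing_overlap_Ioo _ _ x y hxy

lemma RadiallyDecreasing.conv {f g : ℝ → ℝ≥0∞} (hfd : RadiallyDecreasing f) (hf : Measurable f)
    (hfin : ∫⁻ x, f x ≠ ∞) (hgd : RadiallyDecreasing g) (hg : Measurable g)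
    (hgfin : ∫⁻ x, g x ≠ ∞) : RadiallyDecreasing (conv f g) := by
  intro x y hxy
  rw [conv_eq_lintegral_windowMass hf hg hgd hgfin, conv_eq_lintegral_windowMass hf hg hgd hgfin]
  exact lintegral_mono fun u => hfd.windowMass hf hfin _ x y hxy

lemma setLIntegral_windowMass {f : ℝ → ℝ≥0∞} (hf : Measurable f) (E : Set ℝ) (r : ℝ) :
    ∫⁻ x in E, windowMass f r x = ∫⁻ y, f y * overlap E r y := by
  have h1 : ∀ x, windowMass f r x = ∫⁻ y, (Ioo (-r) r).indicator 1 (x - y) * f y := fun x => by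
    rw [windowMass, ← lintegral_indicator measurableSet_Ioo,
      ← lintegral_sub_left_eq_self (fun y => (Ioo (-r) r).indicator 1 (x - y) * f y) x]
    refine lintegral_congr fun w => ?_
    rw [sub_sub_cancel]
    by_cases hw : w ∈ Ioo (-r) r <;> simp [indicator, hw]
  have hi : Measurable ((Ioo (-r) r).indicator (1 : ℝ → ℝ≥0∞)) :=
    measurable_one.indicator measurableSet_Ioo
  simp_rw [h1]
  rw [lintegral_lintegral_swap (by fun_prop)]
  refine lintegral_congr fun y => ?_
  rw [lintegral_mul_const _ (by fun_prop), mul_comm, overlap, inter_comm,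
    ← Measure.restrict_apply measurableSet_Ioo, ← lintegral_indicator_one measurableSet_Ioo]
  congr 1
  refine lintegral_congr fun x => ?_
  simp only [indicator, mem_Ioo]
  congr 1
  exact propext ⟨fun h => ⟨by linarith, by linarith⟩, fun h => ⟨by linarith, by linarith⟩⟩

lemma setLIntegral_conv {f g : ℝ → ℝ≥0∞} (hf : Measurable f) (hg : Measurable g)
    (hgd : RadiallyDecreasing g) (hgfin : ∫⁻ x, g x ≠ ∞) (E : Set ℝ) :
    ∫⁻ x in E, conv f g x =
      ∫⁻ u in Ioi (0 : ℝ), ∫⁻ y, f y * overlap E ((distr g u).toReal / 2) y := by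
  simp_rw [conv_eq_lintegral_windowMass hf hg hgd hgfin]
  rw [lintegral_lintegral_swap]
  · simp_rw [setLIntegral_windowMass hf E]
  · have hr : Measurable fun u => (distr g u).toReal / 2 :=
      (measurable_distr g).ennreal_toReal.div_const 2
    have hS : MeasurableSet {p : (ℝ × ℝ) × ℝ |
        -((distr g p.1.2).toReal / 2) < p.2 ∧ p.2 < (distr g p.1.2).toReal / 2} :=
      (measurableSet_lt (hr.comp measurable_fst.snd).neg measurable_snd).inter
        (measurableSet_lt measurable_snd (hr.comp measurable_fst.snd))
    have hF : Measurable fun p : (ℝ × ℝ) × ℝ => f (p.1.1 - p.2) := by fun_prop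
    convert ((hF.indicator hS).lintegral_prod_right' (ν := volume)).aemeasurable using 1
    ext ⟨x, u⟩
    rw [Function.uncurry_apply_pair, windowMass, ← lintegral_indicator measurableSet_Ioo]
    rfl

/-- Convolution with a radially decreasing function preserves majorization. -/
lemma topMass_conv_le {p q g : ℝ → ℝ≥0∞} (hp : Measurable p) (hq : Measurable q)
    (hg : Measurable g) (hqd : RadiallyDecreasing q) (hgd : RadiallyDecreasing g)
    (hqfin : ∫⁻ x, q x ≠ ∞) (hgfin : ∫⁻ x, g x ≠ ∞) (hle : ∫⁻ x, p x ≤ ∫⁻ x, q x)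
    (hpq : ∀ s, s ≠ ∞ → topMass p s ≤ topMass q s) {s : ℝ≥0∞} (hs : s ≠ ∞) :
    topMass (conv p g) s ≤ topMass (conv q g) s := by
  have hpg := measurable_conv hp hg
  have hqg := measurable_conv hq hg
  have hle' : ∫⁻ x, conv p g x ≤ ∫⁻ x, conv q g x := by
    rw [lintegral_conv hp hg, lintegral_conv hq hg]
    gcongr
  have hfin : ∫⁻ x, conv q g x ≠ ∞ := by
    rw [lintegral_conv hq hg]
    exact ENNReal.mul_ne_top hqfin hgfin
  refine topMass_le_topMass hpg hqg (hqd.conv hq hqfin hgd hg hgfin) hfin (fun t ht =>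
    lintegral_sub_le_lintegral_sub hpg hqg (ne_top_of_le_ne_top hfin hle') hle'
      (fun E hE hEfin => ?_) ht) hs
  set I := Ioo (-((volume E).toReal / 2)) ((volume E).toReal / 2) with hI
  have hvol : volume I = volume E := by
    rw [hI, Real.volume_Ioo, sub_neg_eq_add, add_halves, ENNReal.ofReal_toReal hEfin]
  calc _ = _ := setLIntegral_conv hp hg hgd hgfin E
    _ ≤ ∫⁻ u in Ioi (0 : ℝ), ∫⁻ y, q y * overlap I ((distr g u).toReal / 2) y :=
        lintegral_mono fun u =>
          lintegral_mul_overlap_le hp hq hqd hqfin hpq hE hEfin (by positivity)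
    _ = ∫⁻ x in I, conv q g x := (setLIntegral_conv hq hg hgd hgfin I).symm
    _ ≤ topMass (conv q g) (volume I) := setLIntegral_le_topMass hqg I
    _ = _ := by rw [hvol]

/-- The density of `a * X` when `X` has density `f`. -/
def dilate (a : ℝ) (f : ℝ → ℝ≥0∞) (x : ℝ) : ℝ≥0∞ := ENNReal.ofReal (1 / |a|) * f (x / a)

lemma measurable_dilate (a : ℝ) {f : ℝ → ℝ≥0∞} (hf : Measurable f) : Measurable (dilate a f) := by
  unfold dilate
  fun_prop

lemma RadiallyDecreasing.dilate {f : ℝ → ℝ≥0∞} (hf : RadiallyDecreasing f) (a : ℝ) :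
    RadiallyDecreasing (dilate a f) := fun x y hxy => by
  unfold _root_.dilate
  gcongr
  refine hf _ _ ?_
  rw [abs_div, abs_div]
  gcongr

lemma lintegral_comp_mul_left {h : ℝ → ℝ≥0∞} (hh : Measurable h) {b : ℝ} (hb : b ≠ 0) :
    ∫⁻ x, h (b * x) = ENNReal.ofReal |b⁻¹| * ∫⁻ x, h x := by
  rw [← lintegral_map hh (measurable_const_mul b), Real.map_volume_mul_left hb,
    lintegral_smul_measure, smul_eq_mul]

lemma lintegral_dilate {a : ℝ} (ha : a ≠ 0) {f : ℝ → ℝ≥0∞} (hf : Measurable f) :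
    ∫⁻ x, dilate a f x = ∫⁻ x, f x := by
  unfold dilate
  simp_rw [div_eq_inv_mul _ a]
  rw [lintegral_const_mul _ (by fun_prop), lintegral_comp_mul_left hf (inv_ne_zero ha), inv_inv,
    ← mul_assoc, ← ENNReal.ofReal_mul (by positivity), one_div,
    inv_mul_cancel₀ (abs_ne_zero.2 ha), ENNReal.ofReal_one, one_mul]

lemma distr_dilate {a : ℝ} (ha : a ≠ 0) (f : ℝ → ℝ≥0∞) (u : ℝ) :
    distr (dilate a f) u = ENNReal.ofReal |a| * distr f (|a| * u) := by
  have h0 : ENNReal.ofReal |a| ≠ 0 := by simpa using ha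
  have h : {z | ENNReal.ofReal u < dilate a f z} =
      (a⁻¹ * ·) ⁻¹' {z | ENNReal.ofReal (|a| * u) < f z} := by
    ext z
    rw [mem_preimage, mem_ofPred_eq, mem_ofPred_eq, dilate, one_div,
      ENNReal.ofReal_inv_of_pos (abs_pos.2 ha), ENNReal.ofReal_mul (abs_nonneg a), mul_comm _ (f _),
      ← div_eq_mul_inv, ENNReal.lt_div_iff_mul_lt (.inl h0) (.inl ENNReal.ofReal_ne_top),
      mul_comm, div_eq_inv_mul z a]
  rw [distr, h, Real.volume_preimage_mul_left (inv_ne_zero ha), inv_inv, distr]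

lemma topMass_dilate {a : ℝ} (ha : a ≠ 0) (f : ℝ → ℝ≥0∞) (s : ℝ≥0∞) :
    topMass (dilate a f) s = topMass f (s / ENNReal.ofReal |a|) := by
  have ha' : 0 < |a| := abs_pos.2 ha
  have h0 : ENNReal.ofReal |a| ≠ 0 := by simpa using ha
  have hmul : Monotone (ENNReal.ofReal |a| * ·) := fun _ _ h => mul_le_mul_right h _
  have hm : Measurable fun v => min (s / ENNReal.ofReal |a|) (distr f v) :=
    measurable_const.min (measurable_distr f)
  calc topMass (dilate a f) s
      = ∫⁻ u, ENNReal.ofReal |a| * (Ioi (0 : ℝ)).indicator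
          (fun v => min (s / ENNReal.ofReal |a|) (distr f v)) (|a| * u) := by
        rw [topMass, ← lintegral_indicator measurableSet_Ioi]
        refine lintegral_congr fun u => ?_
        by_cases hu : 0 < u
        · rw [indicator_of_mem (mem_Ioi.2 hu), indicator_of_mem (mem_Ioi.2 (by positivity)),
            distr_dilate ha, hmul.map_min, ENNReal.mul_div_cancel h0 ENNReal.ofReal_ne_top]
        · have : |a| * u ∉ Ioi 0 := by
            rw [mem_Ioi, mul_pos_iff_of_pos_left ha']
            exact hu
          rw [indicator_of_notMem (by exact hu), indicator_of_notMem this, mul_zero]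
    _ = _ := by
        rw [lintegral_const_mul _
            (by exact (hm.indicator measurableSet_Ioi).comp (measurable_const_mul _)),
          lintegral_comp_mul_left (hm.indicator measurableSet_Ioi) ha'.ne',
          lintegral_indicator measurableSet_Ioi, ← mul_assoc, ← ENNReal.ofReal_mul ha'.le,
          abs_inv, abs_abs, mul_inv_cancel₀ ha'.ne', ENNReal.ofReal_one, one_mul, topMass]

lemma ASU.radiallyDecreasing {f : ℝ → ℝ≥0} (hf : ASU 0 f) :
    RadiallyDecreasing fun x => (f x : ℝ≥0∞) := by
  have habs : ∀ x, f |x| = f x := fun x => by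
    rcases abs_choice x with h | h
    · rw [h]
    · rw [h]
      simpa using hf.1 x
  intro x y hxy
  dsimp only
  rw [← habs x, ← habs y]
  exact_mod_cast hf.2.2 (abs_nonneg x) (abs_nonneg y) hxy

lemma RadiallyDecreasing.asue {f : ℝ → ℝ≥0∞} (hf : RadiallyDecreasing f) : ASUE 0 f := by
  refine ⟨fun x => ?_, fun x hx y hy hxy => hf y x ?_, fun x hx y hy hxy => hf x y ?_⟩
  · rw [zero_sub, zero_add]
    exact le_antisymm (hf _ _ (abs_neg x).ge) (hf _ _ (abs_neg x).le)
  · rw [abs_of_nonpos (mem_Iic.1 hx), abs_of_nonpos (mem_Iic.1 hy)]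
    exact neg_le_neg hxy
  · rwa [abs_of_nonneg (mem_Ici.1 hx), abs_of_nonneg (mem_Ici.1 hy)]

lemma Majorizes.topMass_le {ξ π : ℝ → ℝ≥0} (h : Majorizes ξ π) {s : ℝ≥0∞} (hs : s ≠ ∞) :
    topMass (fun x => (π x : ℝ≥0∞)) s ≤ topMass (fun x => (ξ x : ℝ≥0∞)) s := by
  have := h (s.toReal / 2) (by positivity)
  unfold sdr' at this
  rwa [lintegral_Ioo_sdr, lintegral_Ioo_sdr, mul_div_cancel₀ _ two_ne_zero,
    ENNReal.ofReal_toReal hs] at this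

/-- Property 5: the pre-transmission belief update `F¹(π) = π̃ ⋆ μ` (with
`π̃(x) = (1/|a|) π(x/a)`) preserves SU majorization. -/
theorem stmt5 (ξ π μ : ℝ → ℝ≥0) (a : ℝ) (ha : a ≠ 0)
    (hξ : IsPdf ξ) (hπ : IsPdf π) (hμ : IsPdf μ)
    (hξA : ASU 0 ξ) (hμA : ASU 0 μ) (hmaj : Majorizes ξ π) :
    ASUE 0 (fun x => ∫⁻ w,
      ENNReal.ofReal (1 / |a|) * (ξ ((x - w) / a) : ℝ≥0∞) * (μ w : ℝ≥0∞)) ∧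
    MajorizesE
      (fun x => ∫⁻ w,
        ENNReal.ofReal (1 / |a|) * (ξ ((x - w) / a) : ℝ≥0∞) * (μ w : ℝ≥0∞))
      (fun x => ∫⁻ w,
        ENNReal.ofReal (1 / |a|) * (π ((x - w) / a) : ℝ≥0∞) * (μ w : ℝ≥0∞)) := by
  have hξm : Measurable fun x => (ξ x : ℝ≥0∞) := hξ.1.coe_nnreal_ennreal
  have hπm : Measurable fun x => (π x : ℝ≥0∞) := hπ.1.coe_nnreal_ennreal
  have hμm : Measurable fun x => (μ x : ℝ≥0∞) := hμ.1.coe_nnreal_ennreal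
  have hμfin : ∫⁻ x, (μ x : ℝ≥0∞) ≠ ∞ := by simp [hμ.2]
  have hξint := (lintegral_dilate ha hξm).trans hξ.2
  have hπint := (lintegral_dilate ha hπm).trans hπ.2
  have hξfin := hξint.trans_ne ENNReal.one_ne_top
  have hξd := hξA.radiallyDecreasing.dilate a
  have hξm' := measurable_dilate a hξm
  refine ⟨(hξd.conv hξm' hξfin hμA.radiallyDecreasing hμm hμfin).asue, fun ρ _ => ?_⟩
  rw [lintegral_Ioo_sdr, lintegral_Ioo_sdr]
  refine topMass_conv_le (measurable_dilate a hπm) hξm' hμm hξd hμA.radiallyDecreasing hξfin hμfin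
    (hπint.trans hξint.symm).le (fun s hs => ?_) ENNReal.ofReal_ne_top
  rw [topMass_dilate ha, topMass_dilate ha]
  exact hmaj.topMass_le (ENNReal.div_ne_top hs (by simpa using ha))
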